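/- arXiv:1307.7217 — 2 statements merged into one kernel-verified Lean document; each statement's English description precedes it below -/
import Mathlib

section
/- (Basic identity of the two-layer multidimensional transform, Theorem 1.) Let m ≥ 1, a₁, a₂, ν, ρ > 0. Let f₁, f₂ : ℝ × ℝ^m → ℂ be twice continuously differentiable and compactly supported, satisfying the ideal coupling conditions f₁(0,η) = f₂(0,η) and ∂_ξf₁(0,η) = ν·∂_ξf₂(0,η) for all η ∈ ℝ^m. Let g₁, g₂ : ℝ × ℝ^m → ℂ be twice continuously differentiable with g_j and all its first and second partial derivatives bounded, satisfying the eigenvalue equations a_j²·∂²_ξ g_j + Δ_η g_j = −ρ²·g_j (j = 1,2) and the dual coupling conditions ν·a₁²·g₁(0,η) = a₂²·g₂(0,η) and a₁²·∂_ξg₁(0,η) = a₂²·∂_ξg₂(0,η) for all η. Then ∫_{ξ<0}∫_{ℝ^m} g₁·(a₁²·∂²_ξ f₁ + Δ_η f₁) dη dξ + ∫_{ξ>0}∫_{ℝ^m} g₂·(a₂²·∂²_ξ f₂ + Δ_η f₂) dη dξ = −ρ²·(∫_{ξ<0}∫_{ℝ^m} g₁·f₁ dη dξ + ∫_{ξ>0}∫_{ℝ^m}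 g₂·f₂ dη dξ). -/
/-!
For `B = c ∂²_ξ + Δ_η`, the difference `g B f - f B g` is the divergence of a compactly supported
field. Integrated over a half-space, its tangential part vanishes and its normal part leaves the
flux `c ∫ (g ∂_ξ f - f ∂_ξ g) dη` through the interface. The ideal coupling conditions for `f` and
the dual ones for `g` say exactly that the fluxes from the two sides agree, so they cancel: `B` is
symmetric with respect to the coupled pairs, and on the eigen-kernels it acts by its eigenvalue.
-/

open MeasureTheory Set Complex

noncomputable section

/-- First partial derivative `∂f/∂ξ` of `f : ℝ × ℝ^m → ℂ` in the first (scalar) variable. -/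
def dxi (m : ℕ) (f : ℝ × EuclideanSpace ℝ (Fin m) → ℂ)
    (p : ℝ × EuclideanSpace ℝ (Fin m)) : ℂ :=
  deriv (fun t => f (t, p.2)) p.1

/-- Second partial derivative `∂²f/∂ξ²` of `f : ℝ × ℝ^m → ℂ` in the first (scalar)
variable, via the second iterated Fréchet derivative. -/
def d2xi (m : ℕ) (f : ℝ × EuclideanSpace ℝ (Fin m) → ℂ)
    (p : ℝ × EuclideanSpace ℝ (Fin m)) : ℂ :=
  iteratedFDeriv ℝ 2 f p
    ![((1 : ℝ), (0 : EuclideanSpace ℝ (Fin m))), ((1 : ℝ), (0 : EuclideanSpace ℝ (Fin m)))]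

/-- The Laplacian `Δ_η` of `f : ℝ × ℝ^m → ℂ` in the second (vector) variable. -/
def lapEta (m : ℕ) (f : ℝ × EuclideanSpace ℝ (Fin m) → ℂ)
    (p : ℝ × EuclideanSpace ℝ (Fin m)) : ℂ :=
  ∑ i : Fin m, iteratedFDeriv ℝ 2 f p
    ![((0 : ℝ), EuclideanSpace.single i (1 : ℝ)), ((0 : ℝ), EuclideanSpace.single i (1 : ℝ))]

section Slices

theorem hasCompactSupport_comp_prodMk_left {X Y M : Type*} [TopologicalSpace X]
    [TopologicalSpace Y] [R1Space X] [Zero M] {f : X × Y → M} (hf : HasCompactSupport f) (y : Y) :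
    HasCompactSupport fun x => f (x, y) :=
  HasCompactSupport.intro (hf.isCompact.image continuous_fst) fun x hx =>
    image_eq_zero_of_notMem_tsupport fun h => hx ⟨(x, y), h, rfl⟩

theorem hasCompactSupport_comp_prodMk_right {X Y M : Type*} [TopologicalSpace X]
    [TopologicalSpace Y] [R1Space Y] [Zero M] {f : X × Y → M} (hf : HasCompactSupport f) (x : X) :
    HasCompactSupport fun y => f (x, y) :=
  HasCompactSupport.intro (hf.isCompact.image continuous_snd) fun y hy =>
    image_eq_zero_of_notMem_tsupport fun h => hy ⟨(x, y), h, rfl⟩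

variable {𝕜 X E F : Type*} [NontriviallyNormedField 𝕜] [NormedAddCommGroup X] [NormedSpace 𝕜 X]
  [NormedAddCommGroup E] [NormedSpace 𝕜 E] [NormedAddCommGroup F] [NormedSpace 𝕜 F]

theorem deriv_comp_prodMk_left {W : 𝕜 × E → F} {t : 𝕜} {y : E}
    (hW : DifferentiableAt 𝕜 W (t, y)) :
    deriv (fun s => W (s, y)) t = fderiv 𝕜 W (t, y) (1, 0) :=
  (hW.hasFDerivAt.comp_hasDerivAt t ((hasDerivAt_id t).prodMk (hasDerivAt_const t y))).deriv

theorem fderiv_comp_prodMk_right_apply {W : X × E → F} {x : X} {y : E}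
    (hW : DifferentiableAt 𝕜 W (x, y)) (v : E) :
    fderiv 𝕜 (fun z => W (x, z)) y v = fderiv 𝕜 W (x, y) (0, v) :=
  congrArg (· v) (hW.hasFDerivAt.comp y (hasFDerivAt_prodMk_right x y)).fderiv

end Slices

section Divergence

variable {E F : Type*} [NormedAddCommGroup E] [NormedSpace ℝ E] [MeasurableSpace E]
  [NormedAddCommGroup F] [NormedSpace ℝ F]

theorem integrable_fderiv_apply [OpensMeasurableSpace E] {μ : Measure E}
    [IsFiniteMeasureOnCompacts μ] {W : E → F} (hW : ContDiff ℝ 1 W) (hc : HasCompactSupport W)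
    (v : E) : Integrable (fun p => fderiv ℝ W p v) μ :=
  ((hW.continuous_fderiv one_ne_zero).clm_apply continuous_const).integrable_of_hasCompactSupport
    (hc.fderiv_apply ℝ v)

theorem integral_fderiv_apply_eq_zero [FiniteDimensional ℝ E] [BorelSpace E] {μ : Measure E}
    [μ.IsAddHaarMeasure] {W : E → F} (hW : ContDiff ℝ 1 W) (hc : HasCompactSupport W) (v : E) :
    ∫ p, fderiv ℝ W p v ∂μ = 0 := by
  simpa using integral_smul_fderiv_eq_neg_fderiv_smul_of_integrable (μ := μ)
    (f := fun _ : E => (1 : ℝ)) (g := W) (v := v) (by simp)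
    (by simpa using integrable_fderiv_apply hW hc v)
    (by simpa using hW.continuous.integrable_of_hasCompactSupport hc)
    (fun _ _ => differentiableAt_const _) (fun p _ => hW.differentiable one_ne_zero p)

theorem setIntegral_prod_univ_fderiv_apply_zero_left {X : Type*} [NormedAddCommGroup X]
    [NormedSpace ℝ X] [MeasurableSpace X] [OpensMeasurableSpace X] {κ : Measure X} [SFinite κ]
    [IsFiniteMeasureOnCompacts κ] [FiniteDimensional ℝ E] [BorelSpace E] {μ : Measure E}
    [μ.IsAddHaarMeasure] {W : X × E → F} (hW : ContDiff ℝ 1 W) (hc : HasCompactSupport W)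
    (s : Set X) (v : E) :
    ∫ p in s ×ˢ (univ : Set E), fderiv ℝ W p (0, v) ∂(κ.prod μ) = 0 := by
  have hslice (x : X) : ∫ y, fderiv ℝ W (x, y) (0, v) ∂μ = 0 := by
    simp_rw [← fderiv_comp_prodMk_right_apply (hW.differentiable one_ne_zero _)]
    exact integral_fderiv_apply_eq_zero (hW.comp (contDiff_prodMk_right x))
      (hasCompactSupport_comp_prodMk_right hc x) v
  rw [setIntegral_prod _ (integrable_fderiv_apply hW hc _).integrableOn]
  simp only [Measure.restrict_univ, hslice, integral_zero]

variable [OpensMeasurableSpace E] [SecondCountableTopology E] {μ : Measure E} [SFinite μ]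
  [IsFiniteMeasureOnCompacts μ] {W : ℝ × E → F}

theorem setIntegral_prod_univ_fderiv_apply_one_zero (hW : ContDiff ℝ 1 W)
    (hc : HasCompactSupport W) (s : Set ℝ) :
    ∫ p in s ×ˢ (univ : Set E), fderiv ℝ W p (1, 0) ∂(volume.prod μ) =
      ∫ y, (∫ t in s, deriv (fun τ => W (τ, y)) t) ∂μ := by
  simp_rw [deriv_comp_prodMk_left (hW.differentiable one_ne_zero _)]
  rw [← Measure.prod_restrict, Measure.restrict_univ]
  refine integral_prod_symm _ ?_
  rw [← Measure.restrict_univ (μ := μ), Measure.prod_restrict]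
  exact (integrable_fderiv_apply hW hc _).integrableOn

variable [CompleteSpace F]

theorem setIntegral_Iio_prod_univ_fderiv_apply_one_zero (hW : ContDiff ℝ 1 W)
    (hc : HasCompactSupport W) (b : ℝ) :
    ∫ p in Iio b ×ˢ (univ : Set E), fderiv ℝ W p (1, 0) ∂(volume.prod μ) =
      ∫ y, W (b, y) ∂μ := by
  rw [setIntegral_prod_univ_fderiv_apply_one_zero hW hc]
  refine integral_congr_ae (.of_forall fun y => ?_)
  exact integral_Iic_eq_integral_Iio.symm.trans <|
    HasCompactSupport.integral_Iic_deriv_eq (f := fun t => W (t, y))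
      (hW.comp (contDiff_prodMk_left y)) (hasCompactSupport_comp_prodMk_left hc y) b

theorem setIntegral_Ioi_prod_univ_fderiv_apply_one_zero (hW : ContDiff ℝ 1 W)
    (hc : HasCompactSupport W) (b : ℝ) :
    ∫ p in Ioi b ×ˢ (univ : Set E), fderiv ℝ W p (1, 0) ∂(volume.prod μ) =
      -∫ y, W (b, y) ∂μ := by
  rw [setIntegral_prod_univ_fderiv_apply_one_zero hW hc, ← integral_neg]
  refine integral_congr_ae (.of_forall fun y => ?_)
  exact HasCompactSupport.integral_Ioi_deriv_eq (f := fun t => W (t, y))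
    (hW.comp (contDiff_prodMk_left y))
    (hasCompactSupport_comp_prodMk_left hc y) b

end Divergence

section GreenFlux

variable {E 𝔸 : Type*} [NormedAddCommGroup E] [NormedSpace ℝ E] [NormedCommRing 𝔸]
  [NormedAlgebra ℝ 𝔸] {f g : E → 𝔸}

/-- The Green flux `g ∂ᵥf - f ∂ᵥg` of `f` and `g` in the direction `v` at the point `p`: the
component along `v` of the field whose divergence appears in Green's second identity. -/
def greenFlux (f g : E → 𝔸) (v p : E) : 𝔸 :=
  g p * fderiv ℝ f p v - fderiv ℝ g p v * f p

theorem contDiff_greenFlux (hf : ContDiff ℝ 2 f) (hg : ContDiff ℝ 2 g) (v : E) :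
    ContDiff ℝ 1 (greenFlux f g v) := by
  have hf' : ContDiff ℝ 1 (fderiv ℝ f) := hf.fderiv_right one_add_one_eq_two.le
  have hg' : ContDiff ℝ 1 (fderiv ℝ g) := hg.fderiv_right one_add_one_eq_two.le
  exact ((hg.of_le one_le_two).mul (hf'.clm_apply contDiff_const)).sub
    ((hg'.clm_apply contDiff_const).mul (hf.of_le one_le_two))

theorem hasCompactSupport_greenFlux (hf : HasCompactSupport f) (g : E → 𝔸) (v : E) :
    HasCompactSupport (greenFlux f g v) :=
  ((hf.fderiv_apply ℝ v).mul_left (f := g)).sub (hf.mul_left (f := fun p => fderiv ℝ g p v))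

theorem hasFDerivAt_fderiv_apply {F : Type*} [NormedAddCommGroup F] [NormedSpace ℝ F] {h : E → F}
    {p : E} (hh : ContDiffAt ℝ 2 h p) (v : E) :
    HasFDerivAt (fun q => fderiv ℝ h q v) ((fderiv ℝ (fderiv ℝ h) p).flip v) p := by
  have hh' : ContDiffAt ℝ 1 (fderiv ℝ h) p := hh.fderiv_right one_add_one_eq_two.le
  simpa using (hh'.differentiableAt one_ne_zero).hasFDerivAt.clm_apply (hasFDerivAt_const v p)

theorem fderiv_greenFlux_apply {p : E} (hf : ContDiffAt ℝ 2 f p) (hg : ContDiffAt ℝ 2 g p) (v : E) :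
    fderiv ℝ (greenFlux f g v) p v =
      g p * iteratedFDeriv ℝ 2 f p ![v, v] - iteratedFDeriv ℝ 2 g p ![v, v] * f p := by
  have hflux : HasFDerivAt (greenFlux f g v) _ p :=
    ((hg.differentiableAt two_ne_zero).hasFDerivAt.mul (hasFDerivAt_fderiv_apply hf v)).sub
      ((hasFDerivAt_fderiv_apply hg v).mul (hf.differentiableAt two_ne_zero).hasFDerivAt)
  rw [hflux.fderiv]
  simp only [iteratedFDeriv_two_apply, add_apply, sub_apply, smul_apply,
    ContinuousLinearMap.flip_apply, smul_eq_mul, Matrix.cons_val_zero, Matrix.cons_val_one]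
  ring

end GreenFlux

section LayerOperator

variable {m : ℕ} {f g : ℝ × EuclideanSpace ℝ (Fin m) → ℂ}

/-- The operator `c ∂²_ξ + Δ_η` of a single homogeneous layer. The theorem has `c = a_j²`, but `c`
may be any complex number here. -/
def layerOperator (c : ℂ) (f : ℝ × EuclideanSpace ℝ (Fin m) → ℂ)
    (p : ℝ × EuclideanSpace ℝ (Fin m)) : ℂ :=
  c * d2xi m f p + lapEta m f p

theorem continuous_layerOperator (hf : ContDiff ℝ 2 f) (c : ℂ) :
    Continuous (layerOperator c f) := by
  have hf'' : Continuous (iteratedFDeriv ℝ 2 f) := hf.continuous_iteratedFDeriv le_rfl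
  exact (continuous_const.mul (hf''.eval_const _)).add
    (continuous_finsetSum _ fun i _ => hf''.eval_const _)

theorem greenFlux_one_zero {p : ℝ × EuclideanSpace ℝ (Fin m)} (hf : DifferentiableAt ℝ f p)
    (hg : DifferentiableAt ℝ g p) :
    greenFlux f g (1, 0) p = g p * dxi m f p - dxi m g p * f p := by
  simp only [greenFlux, dxi, deriv_comp_prodMk_left hf, deriv_comp_prodMk_left hg]

theorem mul_layerOperator_eq {p : ℝ × EuclideanSpace ℝ (Fin m)} (hf : ContDiffAt ℝ 2 f p)
    (hg : ContDiffAt ℝ 2 g p) (c : ℂ) :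
    g p * layerOperator c f p =
      layerOperator c g p * f p + c * fderiv ℝ (greenFlux f g (1, 0)) p (1, 0) +
        ∑ i, fderiv ℝ (greenFlux f g (0, EuclideanSpace.single i 1)) p
          (0, EuclideanSpace.single i 1) := by
  simp only [fderiv_greenFlux_apply hf hg, Finset.sum_sub_distrib, ← Finset.mul_sum,
    ← Finset.sum_mul, layerOperator, d2xi, lapEta]
  ring

theorem setIntegral_mul_layerOperator (hf : ContDiff ℝ 2 f) (hc : HasCompactSupport f)
    (hg : ContDiff ℝ 2 g) (c : ℂ) (s : Set ℝ) :
    ∫ p in s ×ˢ univ, g p * layerOperator c f p =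
      (∫ p in s ×ˢ univ, layerOperator c g p * f p) +
        c * ∫ p in s ×ˢ univ, fderiv ℝ (greenFlux f g (1, 0)) p (1, 0) := by
  have hflux (v : ℝ × EuclideanSpace ℝ (Fin m)) :
      IntegrableOn (fun p => fderiv ℝ (greenFlux f g v) p v) (s ×ˢ univ) :=
    (integrable_fderiv_apply (contDiff_greenFlux hf hg v)
      (hasCompactSupport_greenFlux hc g v) v).integrableOn
  have hgf : IntegrableOn (fun p => layerOperator c g p * f p) (s ×ˢ univ) :=
    (((continuous_layerOperator hg c).mul hf.continuous).integrable_of_hasCompactSupport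
      hc.mul_left).integrableOn
  have htangential : ∫ p in s ×ˢ univ,
      ∑ i, fderiv ℝ (greenFlux f g (0, EuclideanSpace.single i 1)) p
        (0, EuclideanSpace.single i 1) = 0 := by
    rw [integral_finsetSum _ fun i _ => hflux _]
    exact Finset.sum_eq_zero fun i _ => setIntegral_prod_univ_fderiv_apply_zero_left
      (contDiff_greenFlux hf hg _) (hasCompactSupport_greenFlux hc g _) s _
  have hnormal : IntegrableOn (fun p => layerOperator c g p * f p +
      c * fderiv ℝ (greenFlux f g (1, 0)) p (1, 0)) (s ×ˢ univ) :=
    hgf.add ((hflux _).const_mul c)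
  simp_rw [mul_layerOperator_eq hf.contDiffAt hg.contDiffAt]
  rw [integral_add hnormal (integrable_finsetSum _ fun i _ => hflux _),
    integral_add hgf ((hflux _).const_mul c), htangential, add_zero, integral_const_mul]

theorem setIntegral_Iio_mul_layerOperator (hf : ContDiff ℝ 2 f) (hc : HasCompactSupport f)
    (hg : ContDiff ℝ 2 g) (c : ℂ) (b : ℝ) :
    ∫ p in Iio b ×ˢ univ, g p * layerOperator c f p =
      (∫ p in Iio b ×ˢ univ, layerOperator c g p * f p) +
        c * ∫ η, greenFlux f g (1, 0) (b, η) := by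
  rw [setIntegral_mul_layerOperator hf hc hg, Measure.volume_eq_prod,
    setIntegral_Iio_prod_univ_fderiv_apply_one_zero (contDiff_greenFlux hf hg _)
      (hasCompactSupport_greenFlux hc g _)]

theorem setIntegral_Ioi_mul_layerOperator (hf : ContDiff ℝ 2 f) (hc : HasCompactSupport f)
    (hg : ContDiff ℝ 2 g) (c : ℂ) (b : ℝ) :
    ∫ p in Ioi b ×ˢ univ, g p * layerOperator c f p =
      (∫ p in Ioi b ×ˢ univ, layerOperator c g p * f p) -
        c * ∫ η, greenFlux f g (1, 0) (b, η) := by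
  rw [setIntegral_mul_layerOperator hf hc hg, Measure.volume_eq_prod,
    setIntegral_Ioi_prod_univ_fderiv_apply_one_zero (contDiff_greenFlux hf hg _)
      (hasCompactSupport_greenFlux hc g _), mul_neg, ← sub_eq_add_neg]

end LayerOperator

section Coupling

variable {m : ℕ} {f₁ f₂ g₁ g₂ : ℝ × EuclideanSpace ℝ (Fin m) → ℂ} {c₁ c₂ ν : ℂ}

theorem mul_greenFlux_eq_of_coupling {p : ℝ × EuclideanSpace ℝ (Fin m)}
    (hf₁ : DifferentiableAt ℝ f₁ p) (hf₂ : DifferentiableAt ℝ f₂ p)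
    (hg₁ : DifferentiableAt ℝ g₁ p) (hg₂ : DifferentiableAt ℝ g₂ p)
    (hcoup : f₁ p = f₂ p) (hcoup' : dxi m f₁ p = ν * dxi m f₂ p)
    (hdual : ν * c₁ * g₁ p = c₂ * g₂ p) (hdual' : c₁ * dxi m g₁ p = c₂ * dxi m g₂ p) :
    c₁ * greenFlux f₁ g₁ (1, 0) p = c₂ * greenFlux f₂ g₂ (1, 0) p := by
  rw [greenFlux_one_zero hf₁ hg₁, greenFlux_one_zero hf₂ hg₂, hcoup, hcoup']
  linear_combination dxi m f₂ p * hdual - f₂ p * hdual'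

theorem setIntegral_Iio_add_setIntegral_Ioi_mul_layerOperator (b : ℝ)
    (hf₁ : ContDiff ℝ 2 f₁) (hf₂ : ContDiff ℝ 2 f₂)
    (hf₁supp : HasCompactSupport f₁) (hf₂supp : HasCompactSupport f₂)
    (hg₁ : ContDiff ℝ 2 g₁) (hg₂ : ContDiff ℝ 2 g₂)
    (hcoup : ∀ η, f₁ (b, η) = f₂ (b, η)) (hcoup' : ∀ η, dxi m f₁ (b, η) = ν * dxi m f₂ (b, η))
    (hdual : ∀ η, ν * c₁ * g₁ (b, η) = c₂ * g₂ (b, η))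
    (hdual' : ∀ η, c₁ * dxi m g₁ (b, η) = c₂ * dxi m g₂ (b, η)) :
    (∫ p in Iio b ×ˢ univ, g₁ p * layerOperator c₁ f₁ p) +
        (∫ p in Ioi b ×ˢ univ, g₂ p * layerOperator c₂ f₂ p) =
      (∫ p in Iio b ×ˢ univ, layerOperator c₁ g₁ p * f₁ p) +
        ∫ p in Ioi b ×ˢ univ, layerOperator c₂ g₂ p * f₂ p := by
  have hflux (η : EuclideanSpace ℝ (Fin m)) :
      c₁ * greenFlux f₁ g₁ (1, 0) (b, η) = c₂ * greenFlux f₂ g₂ (1, 0) (b, η) :=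
    mul_greenFlux_eq_of_coupling (hf₁.differentiable two_ne_zero _)
      (hf₂.differentiable two_ne_zero _) (hg₁.differentiable two_ne_zero _)
      (hg₂.differentiable two_ne_zero _) (hcoup η) (hcoup' η) (hdual η) (hdual' η)
  have hinterface : c₁ * ∫ η, greenFlux f₁ g₁ (1, 0) (b, η) =
      c₂ * ∫ η, greenFlux f₂ g₂ (1, 0) (b, η) := by
    simp_rw [← integral_const_mul, hflux]
  rw [setIntegral_Iio_mul_layerOperator hf₁ hf₁supp hg₁,
    setIntegral_Ioi_mul_layerOperator hf₂ hf₂supp hg₂, hinterface]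
  ring

theorem stmt7_general {lam : ℂ} (b : ℝ)
    (hf₁ : ContDiff ℝ 2 f₁) (hf₂ : ContDiff ℝ 2 f₂)
    (hf₁supp : HasCompactSupport f₁) (hf₂supp : HasCompactSupport f₂)
    (hg₁ : ContDiff ℝ 2 g₁) (hg₂ : ContDiff ℝ 2 g₂)
    (hcoup : ∀ η, f₁ (b, η) = f₂ (b, η)) (hcoup' : ∀ η, dxi m f₁ (b, η) = ν * dxi m f₂ (b, η))
    (hdual : ∀ η, ν * c₁ * g₁ (b, η) = c₂ * g₂ (b, η))
    (hdual' : ∀ η, c₁ * dxi m g₁ (b, η) = c₂ * dxi m g₂ (b, η))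
    (hg₁eig : ∀ p, p.1 < b → layerOperator c₁ g₁ p = lam * g₁ p)
    (hg₂eig : ∀ p, b < p.1 → layerOperator c₂ g₂ p = lam * g₂ p) :
    (∫ p in Iio b ×ˢ univ, g₁ p * layerOperator c₁ f₁ p) +
        (∫ p in Ioi b ×ˢ univ, g₂ p * layerOperator c₂ f₂ p) =
      lam * ((∫ p in Iio b ×ˢ univ, g₁ p * f₁ p) + ∫ p in Ioi b ×ˢ univ, g₂ p * f₂ p) := by
  have heig₁ : ∫ p in Iio b ×ˢ univ, layerOperator c₁ g₁ p * f₁ p =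
      lam * ∫ p in Iio b ×ˢ univ, g₁ p * f₁ p := by
    rw [← integral_const_mul]
    exact setIntegral_congr_fun (measurableSet_Iio.prod .univ) fun p hp => by
      simp only [hg₁eig p hp.1, mul_assoc]
  have heig₂ : ∫ p in Ioi b ×ˢ univ, layerOperator c₂ g₂ p * f₂ p =
      lam * ∫ p in Ioi b ×ˢ univ, g₂ p * f₂ p := by
    rw [← integral_const_mul]
    exact setIntegral_congr_fun (measurableSet_Ioi.prod .univ) fun p hp => by
      simp only [hg₂eig p hp.1, mul_assoc]
  rw [setIntegral_Iio_add_setIntegral_Ioi_mul_layerOperator b hf₁ hf₂ hf₁supp hf₂supp hg₁ hg₂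
    hcoup hcoup' hdual hdual', heig₁, heig₂, mul_add]

end Coupling

/-- basic identity of the two-layer multidimensional transform, Theorem 1:
for `f₁, f₂` C², compactly supported, satisfying the ideal coupling conditions at `ξ = 0`,
and eigen-kernels `g₁, g₂` of `B = a_j²∂²_ξ + Δ_η` with eigenvalue `−ρ²`, bounded together
with their first and second derivatives and satisfying the dual coupling conditions,
the transform intertwines `B` with multiplication by `−ρ²`. -/
theorem stmt7 (m : ℕ) (hm : 1 ≤ m) (a₁ a₂ ν ρ : ℝ)
    (ha₁ : 0 < a₁) (ha₂ : 0 < a₂) (hν : 0 < ν) (hρ : 0 < ρ)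
    (f₁ f₂ g₁ g₂ : ℝ × EuclideanSpace ℝ (Fin m) → ℂ)
    (hf₁ : ContDiff ℝ 2 f₁) (hf₂ : ContDiff ℝ 2 f₂)
    (hf₁supp : HasCompactSupport f₁) (hf₂supp : HasCompactSupport f₂)
    (hcoup₁ : ∀ η, f₁ (0, η) = f₂ (0, η))
    (hcoup₂ : ∀ η, dxi m f₁ (0, η) = (ν : ℂ) * dxi m f₂ (0, η))
    (hg₁ : ContDiff ℝ 2 g₁) (hg₂ : ContDiff ℝ 2 g₂)
    (hg₁bd : ∃ C, ∀ p, ‖g₁ p‖ ≤ C ∧ ‖fderiv ℝ g₁ p‖ ≤ C ∧ ‖iteratedFDeriv ℝ 2 g₁ p‖ ≤ C)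
    (hg₂bd : ∃ C, ∀ p, ‖g₂ p‖ ≤ C ∧ ‖fderiv ℝ g₂ p‖ ≤ C ∧ ‖iteratedFDeriv ℝ 2 g₂ p‖ ≤ C)
    (hg₁eig : ∀ p, (a₁ : ℂ) ^ 2 * d2xi m g₁ p + lapEta m g₁ p = -(ρ : ℂ) ^ 2 * g₁ p)
    (hg₂eig : ∀ p, (a₂ : ℂ) ^ 2 * d2xi m g₂ p + lapEta m g₂ p = -(ρ : ℂ) ^ 2 * g₂ p)
    (hdual₁ : ∀ η, (ν : ℂ) * (a₁ : ℂ) ^ 2 * g₁ (0, η) = (a₂ : ℂ) ^ 2 * g₂ (0, η))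
    (hdual₂ : ∀ η, (a₁ : ℂ) ^ 2 * dxi m g₁ (0, η) = (a₂ : ℂ) ^ 2 * dxi m g₂ (0, η)) :
    (∫ p in (Set.Iio (0 : ℝ)) ×ˢ (Set.univ : Set (EuclideanSpace ℝ (Fin m))),
        g₁ p * ((a₁ : ℂ) ^ 2 * d2xi m f₁ p + lapEta m f₁ p))
      + (∫ p in (Set.Ioi (0 : ℝ)) ×ˢ (Set.univ : Set (EuclideanSpace ℝ (Fin m))),
        g₂ p * ((a₂ : ℂ) ^ 2 * d2xi m f₂ p + lapEta m f₂ p))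
    = -(ρ : ℂ) ^ 2 *
      ((∫ p in (Set.Iio (0 : ℝ)) ×ˢ (Set.univ : Set (EuclideanSpace ℝ (Fin m))),
          g₁ p * f₁ p)
        + (∫ p in (Set.Ioi (0 : ℝ)) ×ˢ (Set.univ : Set (EuclideanSpace ℝ (Fin m))),
          g₂ p * f₂ p)) := by
  exact stmt7_general 0 hf₁ hf₂ hf₁supp hf₂supp hg₁ hg₂ hcoup₁ hcoup₂ hdual₁ hdual₂
    (fun p _ => hg₁eig p) (fun p _ => hg₂eig p)
end
end

section
/- Let n ≥ 1 and let f : ℝ^n → ℝ be bounded and continuous. Define u on the open half-space {(x,y) : x > 0, y ∈ ℝ^n} by the Poisson integral u(x,y) = Γ((n+1)/2)·π^{−(n+1)/2}·∫_{ℝ^n} x·f(η)/((|y−η|² + x²)^{(n+1)/2}) dη. Then u is smooth and harmonic on the half-space: ∂²u/∂x² + Δ_y u = 0 for all x > 0, y ∈ ℝ^n. -/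
open MeasureTheory Set Filter

noncomputable section

/-- The Laplacian `Δ_y f = ∑ i, ∂²f/∂yᵢ²` of a real-valued function on `ℝⁿ`,
via the second iterated Fréchet derivative in the coordinate directions. -/
def lapR (n : ℕ) (f : EuclideanSpace ℝ (Fin n) → ℝ) (y : EuclideanSpace ℝ (Fin n)) : ℝ :=
  ∑ i : Fin n, iteratedFDeriv ℝ 2 f y
    ![EuclideanSpace.single i (1 : ℝ), EuclideanSpace.single i (1 : ℝ)]

/-!
Let `d = n + 1`, and let `e` be the unit normal to the boundary hyperplane `e^⊥`. Up to a constant,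
the Poisson integral is `⟪e, z⟫ * v z`, where `v z = ∫ f(η) ‖z - η‖ ^ p dη` with `p = -d` is the
potential of a charge carried by `e^⊥`. A derivative of order `k` of `‖·‖ ^ p` is homogeneous of
degree `p - k`, so that at `z - η` it is `O((1 + ‖η‖) ^ p)`, locally uniformly in `z` off `e^⊥`.
This dominates the differentiations under the integral sign: `v` is smooth, and as `⟪e, η⟫ = 0`,
writing `w` for the potential with exponent `p - 2`,
`∂ₑ v z = p ⟪e, z⟫ w z` and `Δ v = p (p + d - 2) w`.
The Leibniz rule `Δ (⟪e, ·⟫ v) = 2 ∂ₑ v + ⟪e, ·⟫ Δ v` then gives `p (p + d) ⟪e, ·⟫ w`, which vanishes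
for `p = -d`.
-/

section HomogeneousKernel

open scoped ContDiff Topology InnerProductSpace Laplacian

theorem sub_ne_zero_of_notMem_closure_range {α E : Type*} [TopologicalSpace E] [AddGroup E]
    {φ : α → E} {z : E} (hz : z ∉ closure (range φ)) (a : α) : z - φ a ≠ 0 := fun h =>
  hz (subset_closure ⟨a, (sub_eq_zero.mp h).symm⟩)

variable {V G : Type*} [NormedAddCommGroup V] [NormedAddCommGroup G] [NormedSpace ℝ G]

section Measurability

variable {α : Type*} [TopologicalSpace α] [MeasurableSpace α] [OpensMeasurableSpace α]
  {μ : Measure α} {φ : α → V} {f : α → ℝ}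

theorem aestronglyMeasurable_of_one_add_norm_rpow_mul {p : ℝ} (hφ : Continuous φ)
    (hf : AEStronglyMeasurable (fun a => (1 + ‖φ a‖) ^ p * f a) μ) :
    AEStronglyMeasurable f μ := by
  have hpos (a : α) : 0 < 1 + ‖φ a‖ := by positivity
  have hweight : Continuous fun a => (1 + ‖φ a‖) ^ (-p) :=
    (continuous_const.add hφ.norm).rpow_const fun a => .inl (hpos a).ne'
  refine (hweight.aestronglyMeasurable.mul hf).congr (.of_forall fun a => ?_)
  simp only [Pi.mul_apply]
  rw [← mul_assoc, ← Real.rpow_add (hpos a), neg_add_cancel, Real.rpow_zero, one_mul]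

theorem aestronglyMeasurable_smul_kernel [SecondCountableTopology α] {K : V → G} {z : V}
    (hφ : Continuous φ) (hf : AEStronglyMeasurable f μ) (hKc : ContinuousOn K {0}ᶜ)
    (hz : z ∉ closure (range φ)) :
    AEStronglyMeasurable (fun a => f a • K (z - φ a)) μ :=
  hf.smul (hKc.comp_continuous (continuous_const.sub hφ)
    (sub_ne_zero_of_notMem_closure_range hz)).aestronglyMeasurable

end Measurability

variable [NormedSpace ℝ V]

theorem contDiffOn_iteratedFDeriv_of_isOpen {K : V → G} {s : Set V} (hK : ContDiffOn ℝ ∞ K s)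
    (hs : IsOpen s) (k : ℕ) : ContDiffOn ℝ ∞ (iteratedFDeriv ℝ k K) s := fun _ hz =>
  ((hK.contDiffAt (hs.mem_nhds hz)).iteratedFDeriv_right
    (by exact_mod_cast le_top)).contDiffWithinAt

/-- Positive homogeneity of real degree `p`. Nothing is required of `K (t • z)` for `t ≤ 0`. -/
def IsPosHomogeneous (p : ℝ) (K : V → G) : Prop :=
  ∀ ⦃t : ℝ⦄, 0 < t → ∀ z, K (t • z) = t ^ p • K z

namespace IsPosHomogeneous

variable {p q : ℝ} {K : V → G}

protected theorem fderiv (hK : IsPosHomogeneous p K) :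
    IsPosHomogeneous (p - 1) (fderiv ℝ K) := by
  intro t ht z
  have hscale : t • _root_.fderiv ℝ K (t • z) = t ^ p • _root_.fderiv ℝ K z :=
    calc t • _root_.fderiv ℝ K (t • z) = _root_.fderiv ℝ (fun x => K (t • x)) z :=
          (fderiv_comp_smul t).symm
      _ = _root_.fderiv ℝ (t ^ p • K) z := congrArg (_root_.fderiv ℝ · z) (funext (hK ht))
      _ = t ^ p • _root_.fderiv ℝ K z := by rw [fderiv_const_smul_field, Pi.smul_apply]
  rw [Real.rpow_sub_one ht.ne', div_eq_inv_mul, mul_smul, ← hscale, inv_smul_smul₀ ht.ne']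

protected theorem iteratedFDeriv (hK : IsPosHomogeneous p K) (k : ℕ) :
    IsPosHomogeneous (p - k) (iteratedFDeriv ℝ k K) := by
  induction k with
  | zero =>
    intro t ht z
    simp only [iteratedFDeriv_zero_eq_comp, Function.comp_apply, hK ht, map_smul,
      Nat.cast_zero, sub_zero]
  | succ k ih =>
    intro t ht z
    simp only [iteratedFDeriv_succ_eq_comp_left, Function.comp_apply, ih.fderiv ht, map_smul,
      Nat.cast_succ, sub_sub]

theorem exists_norm_le [FiniteDimensional ℝ V] (hK : IsPosHomogeneous p K)
    (hKc : ContinuousOn K {0}ᶜ) : ∃ C, 0 ≤ C ∧ ∀ z ≠ 0, ‖K z‖ ≤ C * ‖z‖ ^ p := by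
  obtain ⟨C, hC⟩ := (isCompact_sphere (0 : V) 1).exists_bound_of_continuousOn
    (hKc.mono fun z hz => ne_zero_of_mem_unit_sphere ⟨z, hz⟩)
  refine ⟨max C 0, le_max_right _ _, fun z hz => ?_⟩
  have hz' : 0 < ‖z‖ := norm_pos_iff.mpr hz
  have hsphere : ‖K (‖z‖⁻¹ • z)‖ ≤ C := hC _ (by simp [norm_smul, hz'.ne'])
  calc ‖K z‖ = ‖K (‖z‖ • ‖z‖⁻¹ • z)‖ := by rw [smul_inv_smul₀ hz'.ne']
    _ = ‖z‖ ^ p * ‖K (‖z‖⁻¹ • z)‖ := by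
      rw [hK hz', norm_smul, Real.norm_of_nonneg (by positivity)]
    _ ≤ max C 0 * ‖z‖ ^ p := by
      rw [mul_comm]
      gcongr
      exact hsphere.trans (le_max_left _ _)

theorem exists_norm_sub_le [FiniteDimensional ℝ V] (hK : IsPosHomogeneous q K)
    (hKc : ContinuousOn K {0}ᶜ) (hqp : q ≤ p) (hp : p ≤ 0) {δ : ℝ} (hδ : 0 < δ) (R : ℝ) :
    ∃ C, ∀ w ζ : V, ‖w‖ ≤ R → δ ≤ ‖w - ζ‖ → ‖K (w - ζ)‖ ≤ C * (1 + ‖ζ‖) ^ p := by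
  obtain ⟨C, hC0, hC⟩ := hK.exists_norm_le hKc
  set c := (1 + R) / δ + 1 with hc
  refine ⟨C * (δ ^ (q - p) * (c⁻¹) ^ p), fun w ζ hw hwζ => ?_⟩
  have hR : 0 ≤ R := (norm_nonneg w).trans hw
  have hc0 : 0 < c := by positivity
  have hpos : 0 < ‖w - ζ‖ := hδ.trans_le hwζ
  have hweight : c⁻¹ * (1 + ‖ζ‖) ≤ ‖w - ζ‖ := by
    have hζ : ‖ζ‖ ≤ ‖w‖ + ‖w - ζ‖ := norm_le_norm_add_norm_sub w ζ
    have hfar : 1 + R ≤ (1 + R) / δ * ‖w - ζ‖ := by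
      rw [div_mul_eq_mul_div, le_div_iff₀ hδ]
      gcongr
    rw [inv_mul_le_iff₀ hc0, hc, add_mul]
    linarith
  calc ‖K (w - ζ)‖ ≤ C * ‖w - ζ‖ ^ q := hC _ (norm_pos_iff.mp hpos)
    _ = C * (‖w - ζ‖ ^ (q - p) * ‖w - ζ‖ ^ p) := by rw [← Real.rpow_add hpos, sub_add_cancel]
    _ ≤ C * (δ ^ (q - p) * (c⁻¹ * (1 + ‖ζ‖)) ^ p) := by
      gcongr C * (?_ * ?_)
      · exact Real.rpow_le_rpow_of_nonpos hδ hwζ (sub_nonpos.mpr hqp)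
      · exact Real.rpow_le_rpow_of_nonpos (by positivity) hweight hp
    _ = C * (δ ^ (q - p) * (c⁻¹) ^ p) * (1 + ‖ζ‖) ^ p := by
      rw [Real.mul_rpow (by positivity) (by positivity)]
      ring

theorem exists_eventually_norm_sub_le [FiniteDimensional ℝ V] {α : Type*} {φ : α → V} {z : V}
    (hK : IsPosHomogeneous q K) (hKc : ContinuousOn K {0}ᶜ) (hqp : q ≤ p) (hp : p ≤ 0)
    (hz : z ∉ closure (range φ)) :
    ∃ C, ∀ᶠ w in 𝓝 z, ∀ a, ‖K (w - φ a)‖ ≤ C * (1 + ‖φ a‖) ^ p := by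
  obtain ⟨ε, hε, hdist⟩ : ∃ ε > 0, ∀ a, ε ≤ dist z (φ a) := by
    simpa only [Metric.mem_closure_range_iff, not_forall, not_exists, not_lt, exists_prop]
      using hz
  obtain ⟨C, hC⟩ := hK.exists_norm_sub_le hKc hqp hp (half_pos hε) (‖z‖ + ε / 2)
  refine ⟨C, ?_⟩
  filter_upwards [Metric.ball_mem_nhds z (half_pos hε)] with w hw a
  have hwz : dist w z < ε / 2 := hw
  refine hC w (φ a) ?_ ?_
  · have := norm_le_norm_add_norm_sub' w z
    rw [← dist_eq_norm] at this
    linarith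
  · have := dist_triangle_left z (φ a) w
    rw [← dist_eq_norm]
    linarith [hdist a]

end IsPosHomogeneous

/-- The potential `z ↦ ∫ f(a) K(z - φ(a)) dμ(a)` with kernel `K` of a charge of density `f` with
respect to `μ`, spread over the image of `φ`. Where the integral diverges, the value is `0`. -/
def kernelPotential {α : Type*} [MeasurableSpace α] (μ : Measure α) (φ : α → V) (f : α → ℝ)
    (K : V → G) (z : V) : G :=
  ∫ a, f a • K (z - φ a) ∂μ

theorem exists_integrable_eventually_norm_smul_kernel_le {α : Type*} [MeasurableSpace α]
    {μ : Measure α} {φ : α → V} {f : α → ℝ} {K : V → G} {p q : ℝ} {z : V}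
    [FiniteDimensional ℝ V]
    (hf : Integrable (fun a => (1 + ‖φ a‖) ^ p * f a) μ) (hp : p ≤ 0)
    (hK : IsPosHomogeneous q K) (hKc : ContinuousOn K {0}ᶜ) (hqp : q ≤ p)
    (hz : z ∉ closure (range φ)) :
    ∃ g : α → ℝ, Integrable g μ ∧ ∀ᶠ w in 𝓝 z, ∀ a, ‖f a • K (w - φ a)‖ ≤ g a := by
  obtain ⟨C, hC⟩ := hK.exists_eventually_norm_sub_le hKc hqp hp hz
  refine ⟨_, hf.norm.const_mul C, hC.mono fun w hw a => ?_⟩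
  calc ‖f a • K (w - φ a)‖ = ‖K (w - φ a)‖ * ‖f a‖ := by rw [norm_smul, mul_comm]
    _ ≤ C * (1 + ‖φ a‖) ^ p * ‖f a‖ := by gcongr; exact hw a
    _ = C * ‖(1 + ‖φ a‖) ^ p * f a‖ := by
      rw [norm_mul, Real.norm_of_nonneg (show 0 ≤ (1 + ‖φ a‖) ^ p by positivity), mul_assoc]

section Potential

variable {α : Type*} [TopologicalSpace α] [SecondCountableTopology α] [MeasurableSpace α]
  [OpensMeasurableSpace α] {μ : Measure α} {φ : α → V} {f : α → ℝ} {K : V → G} {p q : ℝ} {z : V}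
  [FiniteDimensional ℝ V]

theorem integrable_smul_kernel (hφ : Continuous φ)
    (hf : Integrable (fun a => (1 + ‖φ a‖) ^ p * f a) μ) (hp : p ≤ 0)
    (hK : IsPosHomogeneous q K) (hKc : ContinuousOn K {0}ᶜ) (hqp : q ≤ p)
    (hz : z ∉ closure (range φ)) :
    Integrable (fun a => f a • K (z - φ a)) μ := by
  obtain ⟨g, hg, hle⟩ := exists_integrable_eventually_norm_smul_kernel_le hf hp hK hKc hqp hz
  have hfm := aestronglyMeasurable_of_one_add_norm_rpow_mul hφ hf.aestronglyMeasurable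
  exact hg.mono' (aestronglyMeasurable_smul_kernel hφ hfm hKc hz) (.of_forall hle.self_of_nhds)

theorem hasFDerivAt_kernelPotential (hφ : Continuous φ)
    (hf : Integrable (fun a => (1 + ‖φ a‖) ^ p * f a) μ) (hp : p ≤ 0)
    (hK : IsPosHomogeneous q K) (hKs : ContDiffOn ℝ 1 K {0}ᶜ) (hqp : q ≤ p)
    (hz : z ∉ closure (range φ)) :
    HasFDerivAt (kernelPotential μ φ f K) (kernelPotential μ φ f (fderiv ℝ K) z) z := by
  have hKd {w : V} (hw : w ∉ closure (range φ)) (a : α) :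
      HasFDerivAt (fun w => f a • K (w - φ a)) (f a • fderiv ℝ K (w - φ a)) w := by
    have hd := (hKs.contDiffAt (isOpen_compl_singleton.mem_nhds
      (sub_ne_zero_of_notMem_closure_range hw a))).differentiableAt one_ne_zero
    exact ((hasFDerivAt_comp_sub (φ a)).mpr hd.hasFDerivAt).const_smul (f a)
  have hDc : ContinuousOn (fderiv ℝ K) {0}ᶜ :=
    hKs.continuousOn_fderiv_of_isOpen isOpen_compl_singleton le_rfl
  have hfm := aestronglyMeasurable_of_one_add_norm_rpow_mul hφ hf.aestronglyMeasurable
  obtain ⟨g, hg, hle⟩ := exists_integrable_eventually_norm_smul_kernel_le hf hp hK.fderiv hDc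
    (by linarith) hz
  have hnear : ∀ᶠ w in 𝓝 z, w ∉ closure (range φ) := isClosed_closure.isOpen_compl.mem_nhds hz
  exact hasFDerivAt_integral_of_dominated_of_fderiv_le (hle.and hnear)
    (hnear.mono fun w => aestronglyMeasurable_smul_kernel hφ hfm hKs.continuousOn)
    (integrable_smul_kernel hφ hf hp hK hKs.continuousOn hqp hz)
    (aestronglyMeasurable_smul_kernel hφ hfm hDc hz)
    (.of_forall fun a w hw => hw.1 a) hg (.of_forall fun a w hw => hKd hw.2 a)

theorem map_kernelPotential {H : Type*} [NormedAddCommGroup H] [NormedSpace ℝ H]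
    [CompleteSpace G] [CompleteSpace H] (L : G →L[ℝ] H) (hφ : Continuous φ)
    (hf : Integrable (fun a => (1 + ‖φ a‖) ^ p * f a) μ) (hp : p ≤ 0)
    (hK : IsPosHomogeneous q K) (hKc : ContinuousOn K {0}ᶜ) (hqp : q ≤ p)
    (hz : z ∉ closure (range φ)) :
    L (kernelPotential μ φ f K z) = kernelPotential μ φ f (L ∘ K) z := by
  have hint := integrable_smul_kernel hφ hf hp hK hKc hqp hz
  simp only [kernelPotential, ← L.integral_comp_comm hint, map_smul, Function.comp_apply]

theorem hasFTaylorSeriesUpToOn_kernelPotential [CompleteSpace G] (hφ : Continuous φ)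
    (hf : Integrable (fun a => (1 + ‖φ a‖) ^ p * f a) μ) (hp : p ≤ 0)
    (hK : IsPosHomogeneous p K) (hKs : ContDiffOn ℝ ∞ K {0}ᶜ) :
    HasFTaylorSeriesUpToOn ∞ (kernelPotential μ φ f K)
      (fun z k => kernelPotential μ φ f (iteratedFDeriv ℝ k K) z) (closure (range φ))ᶜ := by
  have hs (k : ℕ) : ContDiffOn ℝ ∞ (iteratedFDeriv ℝ k K) {0}ᶜ :=
    contDiffOn_iteratedFDeriv_of_isOpen hKs isOpen_compl_singleton k
  have hdeg (k : ℕ) : p - k ≤ p := sub_le_self p k.cast_nonneg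
  have hderiv (k : ℕ) {z : V} (hz : z ∉ closure (range φ)) :
      HasFDerivAt (kernelPotential μ φ f (iteratedFDeriv ℝ k K))
        (kernelPotential μ φ f (iteratedFDeriv ℝ (k + 1) K) z).curryLeft z := by
    convert! hasFDerivAt_kernelPotential hφ hf hp (hK.iteratedFDeriv k) ((hs k).of_le (by simp))
      (hdeg k) hz using 1
    rw [fderiv_iteratedFDeriv]
    exact map_kernelPotential (H := V →L[ℝ] V [×k]→L[ℝ] G)
      (continuousMultilinearCurryLeftEquiv ℝ (fun _ : Fin (k + 1) => V)
        G).toContinuousLinearEquiv.toContinuousLinearMap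
      hφ hf hp (hK.iteratedFDeriv (k + 1)) (hs (k + 1)).continuousOn (hdeg (k + 1)) hz
  refine ⟨fun z hz => ?_, fun k _ z hz => (hderiv k hz).hasFDerivWithinAt,
    fun k _ z hz => (hderiv k hz).continuousAt.continuousWithinAt⟩
  exact map_kernelPotential
    (continuousMultilinearCurryFin0 ℝ V G).toContinuousLinearEquiv.toContinuousLinearMap
    hφ hf hp (hK.iteratedFDeriv 0) (hs 0).continuousOn (hdeg 0) hz

theorem contDiffOn_kernelPotential [CompleteSpace G] (hφ : Continuous φ)
    (hf : Integrable (fun a => (1 + ‖φ a‖) ^ p * f a) μ) (hp : p ≤ 0)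
    (hK : IsPosHomogeneous p K) (hKs : ContDiffOn ℝ ∞ K {0}ᶜ) :
    ContDiffOn ℝ ∞ (kernelPotential μ φ f K) (closure (range φ))ᶜ :=
  (hasFTaylorSeriesUpToOn_kernelPotential hφ hf hp hK hKs).contDiffOn

theorem iteratedFDeriv_kernelPotential [CompleteSpace G] (hφ : Continuous φ)
    (hf : Integrable (fun a => (1 + ‖φ a‖) ^ p * f a) μ) (hp : p ≤ 0)
    (hK : IsPosHomogeneous p K) (hKs : ContDiffOn ℝ ∞ K {0}ᶜ) (hz : z ∉ closure (range φ))
    (k : ℕ) :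
    iteratedFDeriv ℝ k (kernelPotential μ φ f K) z =
      kernelPotential μ φ f (iteratedFDeriv ℝ k K) z := by
  have hopen : IsOpen (closure (range φ))ᶜ := isClosed_closure.isOpen_compl
  rw [← iteratedFDerivWithin_of_isOpen k hopen hz]
  exact ((hasFTaylorSeriesUpToOn_kernelPotential hφ hf hp hK hKs
    ).eq_iteratedFDerivWithin_of_uniqueDiffOn (by exact_mod_cast le_top) hopen.uniqueDiffOn hz).symm

end Potential

theorem laplacian_kernelPotential {E : Type*} [NormedAddCommGroup E] [InnerProductSpace ℝ E]
    [FiniteDimensional ℝ E] [CompleteSpace G] {α : Type*} [TopologicalSpace α]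
    [SecondCountableTopology α] [MeasurableSpace α] [OpensMeasurableSpace α] {μ : Measure α}
    {φ : α → E} {f : α → ℝ} {K : E → G} {p : ℝ} {z : E} (hφ : Continuous φ)
    (hf : Integrable (fun a => (1 + ‖φ a‖) ^ p * f a) μ) (hp : p ≤ 0)
    (hK : IsPosHomogeneous p K) (hKs : ContDiffOn ℝ ∞ K {0}ᶜ) (hz : z ∉ closure (range φ)) :
    Δ (kernelPotential μ φ f K) z = kernelPotential μ φ f (Δ K) z := by
  let b := stdOrthonormalBasis ℝ E
  let T : (E [×2]→L[ℝ] G) →L[ℝ] G :=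
    ∑ i, ContinuousMultilinearMap.apply ℝ (fun _ : Fin 2 => E) G ![b i, b i]
  have hT (F : E → G) : Δ F = T ∘ iteratedFDeriv ℝ 2 F := by
    ext w
    simp [T, b, InnerProductSpace.laplacian_eq_iteratedFDeriv_stdOrthonormalBasis]
  rw [hT, hT, Function.comp_apply, iteratedFDeriv_kernelPotential hφ hf hp hK hKs hz]
  exact map_kernelPotential T hφ hf hp (hK.iteratedFDeriv 2)
    (contDiffOn_iteratedFDeriv_of_isOpen hKs isOpen_compl_singleton 2).continuousOn (by simp) hz

end HomogeneousKernel

section NormPower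

open scoped ContDiff Topology RealInnerProductSpace InnerProductSpace Laplacian

theorem iteratedFDeriv_two_apply_eq_fderiv_fderiv {V G : Type*} [NormedAddCommGroup V]
    [NormedSpace ℝ V] [NormedAddCommGroup G] [NormedSpace ℝ G] {F : V → G} {z : V}
    (hF : ContDiffAt ℝ 2 F z) (u v : V) :
    iteratedFDeriv ℝ 2 F z ![u, v] = fderiv ℝ (fun w => fderiv ℝ F w v) z u := by
  have hdiff : DifferentiableAt ℝ (fderiv ℝ F) z :=
    (hF.fderiv_right (m := 1) le_rfl).differentiableAt one_ne_zero
  rw [iteratedFDeriv_two_apply, fderiv_clm_apply hdiff (differentiableAt_const v)]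
  simp

variable {E : Type*} [NormedAddCommGroup E] [InnerProductSpace ℝ E]

theorem contDiffOn_norm_rpow (p : ℝ) : ContDiffOn ℝ ∞ (fun z : E => ‖z‖ ^ p) {0}ᶜ := fun _ hz =>
  ((contDiffAt_norm ℝ hz).rpow_const_of_ne (norm_ne_zero_iff.mpr hz)).contDiffWithinAt

theorem hasFDerivAt_norm_rpow_of_ne {z : E} (hz : z ≠ 0) (p : ℝ) :
    HasFDerivAt (fun z : E => ‖z‖ ^ p) ((p * ‖z‖ ^ (p - 2)) • innerSL ℝ z) z := by
  have hpos : 0 < ‖z‖ := norm_pos_iff.mpr hz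
  convert! (hasStrictFDerivAt_norm_sq z).hasFDerivAt.rpow_const (p := p / 2)
    (.inl (by positivity)) using 1
  · ext w
    rw [← Real.rpow_natCast_mul (norm_nonneg w)]
    ring_nf
  · rw [← Real.rpow_natCast_mul hpos.le, ← Nat.cast_smul_eq_nsmul ℝ, smul_smul]
    push_cast
    ring_nf

theorem fderiv_norm_rpow_of_ne {z : E} (hz : z ≠ 0) (p : ℝ) (v : E) :
    fderiv ℝ (fun z : E => ‖z‖ ^ p) z v = p * ‖z‖ ^ (p - 2) * ⟪z, v⟫ := by
  simp [(hasFDerivAt_norm_rpow_of_ne hz p).fderiv]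

theorem iteratedFDeriv_two_norm_rpow {z : E} (hz : z ≠ 0) (p : ℝ) (v : E) :
    iteratedFDeriv ℝ 2 (fun z : E => ‖z‖ ^ p) z ![v, v] =
      p * ((p - 2) * ‖z‖ ^ (p - 4) * ⟪z, v⟫ ^ 2 + ‖z‖ ^ (p - 2) * ‖v‖ ^ 2) := by
  have hsmooth : ContDiffAt ℝ 2 (fun z : E => ‖z‖ ^ p) z :=
    (contDiffAt_norm ℝ hz).rpow_const_of_ne (norm_ne_zero_iff.mpr hz)
  have hfderiv : (fun w => fderiv ℝ (fun z : E => ‖z‖ ^ p) w v) =ᶠ[𝓝 z]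
      fun w => p * ‖w‖ ^ (p - 2) * ⟪w, v⟫ := by
    filter_upwards [isOpen_ne.mem_nhds hz] with w hw using fderiv_norm_rpow_of_ne hw p v
  have hsecond := ((hasFDerivAt_norm_rpow_of_ne hz (p - 2)).const_mul p).mul
    ((hasFDerivAt_id z).inner ℝ (hasFDerivAt_const v z))
  rw [iteratedFDeriv_two_apply_eq_fderiv_fderiv hsmooth,
    (hsecond.congr_of_eventuallyEq hfderiv).fderiv]
  simp only [id_eq, add_apply, smul_apply, ContinuousLinearMap.comp_apply,
    ContinuousLinearMap.prod_apply, ContinuousLinearMap.id_apply, zero_apply,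
    fderivInnerCLM_apply, inner_zero_right, real_inner_self_eq_norm_sq, zero_add, smul_eq_mul,
    innerSL_apply_apply, show p - 2 - 2 = p - 4 by ring]
  ring

variable [FiniteDimensional ℝ E]

theorem laplacian_norm_rpow {z : E} (hz : z ≠ 0) (p : ℝ) :
    Δ (fun z : E => ‖z‖ ^ p) z = p * (p + Module.finrank ℝ E - 2) * ‖z‖ ^ (p - 2) := by
  let b := stdOrthonormalBasis ℝ E
  have hpow : ‖z‖ ^ (p - 4) * ‖z‖ ^ 2 = ‖z‖ ^ (p - 2) := by
    rw [← Real.rpow_add_natCast (norm_ne_zero_iff.mpr hz)]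
    norm_num [sub_add]
  calc Δ (fun z : E => ‖z‖ ^ p) z
      = ∑ i, p * ((p - 2) * ‖z‖ ^ (p - 4) * ⟪z, b i⟫ ^ 2 + ‖z‖ ^ (p - 2)) := by
        simp [InnerProductSpace.laplacian_eq_iteratedFDeriv_orthonormalBasis _ b,
          iteratedFDeriv_two_norm_rpow hz]
    _ = p * ((p - 2) * (‖z‖ ^ (p - 4) * ‖z‖ ^ 2) + Module.finrank ℝ E * ‖z‖ ^ (p - 2)) := by
        rw [← Finset.mul_sum, Finset.sum_add_distrib, ← Finset.mul_sum, b.sum_sq_inner_left,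
          Finset.sum_const, Finset.card_univ, Fintype.card_fin, nsmul_eq_mul]
        ring
    _ = p * (p + Module.finrank ℝ E - 2) * ‖z‖ ^ (p - 2) := by
        rw [hpow]
        ring

theorem laplacian_inner_mul {v : E → ℝ} {z : E} (hv : ContDiffAt ℝ 2 v z) (e : E) :
    Δ (fun w => ⟪e, w⟫ * v w) z = 2 * fderiv ℝ v z e + ⟪e, z⟫ * Δ v z := by
  let b := stdOrthonormalBasis ℝ E
  have hdiff : ∀ᶠ w in 𝓝 z, DifferentiableAt ℝ v w :=
    (hv.eventually (by simp)).mono fun w hw => hw.differentiableAt two_ne_zero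
  have hfderiv : fderiv ℝ (fun w => ⟪e, w⟫ * v w) =ᶠ[𝓝 z]
      fun w => ⟪e, w⟫ • fderiv ℝ v w + v w • innerSL ℝ e := by
    filter_upwards [hdiff] with w hw
    exact ((innerSL ℝ e).hasFDerivAt.mul hw.hasFDerivAt).fderiv
  have hsecond := ((innerSL ℝ e).hasFDerivAt.smul
      ((hv.fderiv_right (m := 1) le_rfl).differentiableAt one_ne_zero).hasFDerivAt).add
    (hdiff.self_of_nhds.hasFDerivAt.smul_const (innerSL ℝ e))
  have hterm (u : E) : iteratedFDeriv ℝ 2 (fun w => ⟪e, w⟫ * v w) z ![u, u] =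
      2 * (⟪e, u⟫ * fderiv ℝ v z u) + ⟪e, z⟫ * iteratedFDeriv ℝ 2 v z ![u, u] := by
    rw [iteratedFDeriv_two_apply, iteratedFDeriv_two_apply,
      (hsecond.congr_of_eventuallyEq hfderiv).fderiv]
    simp only [Matrix.cons_val_zero, Matrix.cons_val_one, Matrix.cons_val_fin_one, add_apply,
      smul_apply, ContinuousLinearMap.smulRight_apply, innerSL_apply_apply, smul_eq_mul]
    ring
  have hgradient : ∑ i, ⟪e, b i⟫ * fderiv ℝ v z (b i) = fderiv ℝ v z e := by
    conv_rhs => rw [← b.sum_repr' e]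
    simp [real_inner_comm]
  simp only [InnerProductSpace.laplacian_eq_iteratedFDeriv_orthonormalBasis _ b, hterm,
    Finset.sum_add_distrib, ← Finset.mul_sum, hgradient]

end NormPower

section NormPowerPotential

open scoped ContDiff RealInnerProductSpace InnerProductSpace Laplacian

theorem isPosHomogeneous_norm_rpow {V : Type*} [NormedAddCommGroup V] [NormedSpace ℝ V] (p : ℝ) :
    IsPosHomogeneous p fun z : V => ‖z‖ ^ p := fun t ht z => by
  beta_reduce
  rw [norm_smul, Real.norm_of_nonneg ht.le, Real.mul_rpow ht.le (norm_nonneg z), smul_eq_mul]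

variable {E : Type*} [NormedAddCommGroup E] [InnerProductSpace ℝ E] [FiniteDimensional ℝ E]
  {α : Type*} [TopologicalSpace α] [SecondCountableTopology α]
  [MeasurableSpace α] [OpensMeasurableSpace α] {μ : Measure α} {φ : α → E} {f : α → ℝ} {p : ℝ}
  {z : E}

theorem fderiv_kernelPotential_norm_rpow {e : E} (hφ : Continuous φ) (he : ∀ a, ⟪e, φ a⟫ = 0)
    (hf : Integrable (fun a => (1 + ‖φ a‖) ^ p * f a) μ) (hp : p ≤ 0)
    (hz : z ∉ closure (range φ)) :
    fderiv ℝ (kernelPotential μ φ f fun w => ‖w‖ ^ p) z e =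
      p * ⟪e, z⟫ * kernelPotential μ φ f (fun w => ‖w‖ ^ (p - 2)) z := by
  let applyE : (E →L[ℝ] ℝ) →L[ℝ] ℝ := ContinuousLinearMap.apply ℝ ℝ e
  have hK := isPosHomogeneous_norm_rpow (V := E) p
  have hKs : ContDiffOn ℝ 1 (fun w : E => ‖w‖ ^ p) {0}ᶜ := (contDiffOn_norm_rpow p).of_le (by simp)
  have hterm (a : α) : (applyE ∘ fderiv ℝ fun w => ‖w‖ ^ p) (z - φ a) =
      p * ⟪e, z⟫ * ‖z - φ a‖ ^ (p - 2) := by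
    change fderiv ℝ (fun w => ‖w‖ ^ p) (z - φ a) e = _
    rw [fderiv_norm_rpow_of_ne (sub_ne_zero_of_notMem_closure_range hz a), real_inner_comm,
      inner_sub_right, he, sub_zero]
    ring
  calc fderiv ℝ (kernelPotential μ φ f fun w => ‖w‖ ^ p) z e
      = applyE (kernelPotential μ φ f (fderiv ℝ fun w => ‖w‖ ^ p) z) := by
        rw [(hasFDerivAt_kernelPotential hφ hf hp hK hKs le_rfl hz).fderiv]
        rfl
    _ = kernelPotential μ φ f (applyE ∘ fderiv ℝ fun w => ‖w‖ ^ p) z :=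
        map_kernelPotential applyE hφ hf hp hK.fderiv
          (hKs.continuousOn_fderiv_of_isOpen isOpen_compl_singleton le_rfl) (by simp) hz
    _ = p * ⟪e, z⟫ * kernelPotential μ φ f (fun w => ‖w‖ ^ (p - 2)) z := by
        simp only [kernelPotential, hterm, smul_eq_mul, mul_left_comm (f _), integral_const_mul]

theorem laplacian_kernelPotential_norm_rpow (hφ : Continuous φ)
    (hf : Integrable (fun a => (1 + ‖φ a‖) ^ p * f a) μ) (hp : p ≤ 0)
    (hz : z ∉ closure (range φ)) :
    Δ (kernelPotential μ φ f fun w => ‖w‖ ^ p) z =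
      p * (p + Module.finrank ℝ E - 2) * kernelPotential μ φ f (fun w => ‖w‖ ^ (p - 2)) z := by
  rw [laplacian_kernelPotential hφ hf hp (isPosHomogeneous_norm_rpow p) (contDiffOn_norm_rpow p) hz]
  simp only [kernelPotential, laplacian_norm_rpow (sub_ne_zero_of_notMem_closure_range hz _),
    smul_eq_mul, mul_left_comm (f _), integral_const_mul]

theorem laplacian_inner_mul_kernelPotential_norm_rpow {e : E} (hφ : Continuous φ)
    (he : ∀ a, ⟪e, φ a⟫ = 0) (hf : Integrable (fun a => (1 + ‖φ a‖) ^ p * f a) μ) (hp : p ≤ 0)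
    (hz : z ∉ closure (range φ)) :
    Δ (fun z => ⟪e, z⟫ * kernelPotential μ φ f (fun w => ‖w‖ ^ p) z) z =
      p * (p + Module.finrank ℝ E) * ⟪e, z⟫ *
        kernelPotential μ φ f (fun w => ‖w‖ ^ (p - 2)) z := by
  have hsmooth : ContDiffAt ℝ ∞ (kernelPotential μ φ f fun w => ‖w‖ ^ p) z :=
    (contDiffOn_kernelPotential hφ hf hp (isPosHomogeneous_norm_rpow p)
      (contDiffOn_norm_rpow p)).contDiffAt (isClosed_closure.isOpen_compl.mem_nhds hz)
  rw [laplacian_inner_mul (hsmooth.of_le ENat.LEInfty.out),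
    fderiv_kernelPotential_norm_rpow hφ he hf hp hz,
    laplacian_kernelPotential_norm_rpow hφ hf hp hz]
  ring

end NormPowerPotential

section ProductLaplacian

open scoped InnerProductSpace Laplacian

theorem iteratedFDeriv_two_comp_of_hasFDerivAt_const {V W G : Type*} [NormedAddCommGroup V]
    [NormedSpace ℝ V] [NormedAddCommGroup W] [NormedSpace ℝ W] [NormedAddCommGroup G]
    [NormedSpace ℝ G] {F : V → G} {γ : W → V} {L : W →L[ℝ] V} {x : W}
    (hγ : ∀ x, HasFDerivAt γ L x) (hF : ContDiffAt ℝ 2 F (γ x)) (u v : W) :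
    iteratedFDeriv ℝ 2 (fun x => F (γ x)) x ![u, v] =
      iteratedFDeriv ℝ 2 F (γ x) ![L u, L v] := by
  have hdiff : ∀ᶠ w in nhds x, DifferentiableAt ℝ F (γ w) :=
    (hγ x).continuousAt.eventually
      ((hF.eventually (by simp)).mono fun _ hw => hw.differentiableAt two_ne_zero)
  have hfderiv : fderiv ℝ (fun x => F (γ x)) =ᶠ[nhds x] fun w => (fderiv ℝ F (γ w)).comp L :=
    hdiff.mono fun w hw => (hw.hasFDerivAt.comp w (hγ w)).fderiv
  have hsecond : HasFDerivAt (fderiv ℝ F) (fderiv ℝ (fderiv ℝ F) (γ x)) (γ x) :=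
    ((hF.fderiv_right (m := 1) le_rfl).differentiableAt one_ne_zero).hasFDerivAt
  have hcomp := (hsecond.comp x (hγ x)).clm_comp (hasFDerivAt_const L x)
  rw [iteratedFDeriv_two_apply, iteratedFDeriv_two_apply,
    (hcomp.congr_of_eventuallyEq hfderiv).fderiv]
  simp

theorem laplacian_withLp_prod {E F G : Type*} [NormedAddCommGroup E] [InnerProductSpace ℝ E]
    [FiniteDimensional ℝ E] [NormedAddCommGroup F] [InnerProductSpace ℝ F]
    [FiniteDimensional ℝ F] [NormedAddCommGroup G] [NormedSpace ℝ G]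
    {U : WithLp 2 (E × F) → G} {x : E} {y : F} (hU : ContDiffAt ℝ 2 U (WithLp.toLp 2 (x, y))) :
    Δ U (WithLp.toLp 2 (x, y)) =
      Δ (fun s => U (WithLp.toLp 2 (s, y))) x + Δ (fun t => U (WithLp.toLp 2 (x, t))) y := by
  let e := (WithLp.prodContinuousLinearEquiv 2 ℝ E F).symm
  have hfst (s : E) : HasFDerivAt (fun s => WithLp.toLp 2 (s, y))
      (e.toContinuousLinearMap.comp (.inl ℝ E F)) s :=
    e.hasFDerivAt.comp s (hasFDerivAt_prodMk_left s y)
  have hsnd (t : F) : HasFDerivAt (fun t => WithLp.toLp 2 (x, t))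
      (e.toContinuousLinearMap.comp (.inr ℝ E F)) t :=
    e.hasFDerivAt.comp t (hasFDerivAt_prodMk_right x t)
  simp [InnerProductSpace.laplacian_eq_iteratedFDeriv_orthonormalBasis U
      ((stdOrthonormalBasis ℝ E).prod (stdOrthonormalBasis ℝ F)), e,
    InnerProductSpace.laplacian_eq_iteratedFDeriv_stdOrthonormalBasis,
    iteratedFDeriv_two_comp_of_hasFDerivAt_const hfst hU,
    iteratedFDeriv_two_comp_of_hasFDerivAt_const hsnd hU]

theorem lapR_eq_laplacian (n : ℕ) (f : EuclideanSpace ℝ (Fin n) → ℝ) : lapR n f = Δ f := by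
  ext y
  simp [lapR, InnerProductSpace.laplacian_eq_iteratedFDeriv_orthonormalBasis f
    (EuclideanSpace.basisFun (Fin n) ℝ)]

end ProductLaplacian

section Poisson

open scoped ContDiff RealInnerProductSpace InnerProductSpace Laplacian

variable {F : Type*} [NormedAddCommGroup F] [InnerProductSpace ℝ F]

theorem notMem_closure_range_toLp_zero {z : WithLp 2 (ℝ × F)} (hz : 0 < z.fst) :
    z ∉ closure (range fun η : F => WithLp.toLp 2 ((0 : ℝ), η)) := by
  have hclosed : IsClosed {w : WithLp 2 (ℝ × F) | w.fst ≤ 0} :=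
    isClosed_le (WithLp.fstL 2 ℝ ℝ F).continuous continuous_const
  have hrange : range (fun η : F => WithLp.toLp 2 ((0 : ℝ), η)) ⊆ {w | w.fst ≤ 0} :=
    range_subset_iff.mpr fun _ => le_refl (0 : ℝ)
  exact fun h => hz.not_ge (closure_minimal hrange hclosed h)

variable [MeasurableSpace F] {μ : Measure F} {f : F → ℝ}

/-- The Poisson integral of the charge `f dμ` on the boundary of the half-space `{z | 0 < z.fst}`
of `ℝ × F`, without its normalising constant. The leading inner product is `z.fst`. -/
def poissonIntegral (μ : Measure F) (f : F → ℝ) (z : WithLp 2 (ℝ × F)) : ℝ :=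
  ⟪WithLp.toLp 2 (1, 0), z⟫ * kernelPotential μ (fun η => WithLp.toLp 2 (0, η)) f
    (fun w => ‖w‖ ^ (-((Module.finrank ℝ F : ℝ) + 1))) z

theorem poissonIntegral_toLp (x : ℝ) (y : F) :
    poissonIntegral μ f (WithLp.toLp 2 (x, y)) =
      ∫ η, x * f η / (‖y - η‖ ^ 2 + x ^ 2) ^ (((Module.finrank ℝ F : ℝ) + 1) / 2) ∂μ := by
  rw [poissonIntegral, kernelPotential, ← integral_const_mul]
  congr with η
  have hnorm : ‖y - η‖ ^ 2 + x ^ 2 = ‖WithLp.toLp 2 (x, y) - WithLp.toLp 2 (0, η)‖ ^ 2 := by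
    simp [WithLp.prod_norm_sq_eq_of_L2, add_comm]
  have hexp : ((2 : ℕ) : ℝ) * (((Module.finrank ℝ F : ℝ) + 1) / 2) = Module.finrank ℝ F + 1 := by
    push_cast
    ring
  rw [hnorm, ← Real.rpow_natCast_mul (norm_nonneg _), hexp, Real.rpow_neg (norm_nonneg _)]
  simp [WithLp.prod_inner_apply, div_eq_mul_inv, mul_assoc]

variable [FiniteDimensional ℝ F] [BorelSpace F]

theorem integrable_one_add_norm_rpow_mul_of_bounded [μ.IsAddHaarMeasure] {r : ℝ}
    (hr : Module.finrank ℝ F < r) (hf : AEStronglyMeasurable f μ) (hbdd : ∃ C, ∀ η, |f η| ≤ C) :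
    Integrable (fun η => (1 + ‖η‖) ^ (-r) * f η) μ :=
  (integrable_one_add_norm hr).mul_bdd hf (.of_forall hbdd.choose_spec)

theorem contDiffOn_poissonIntegral
    (hf : Integrable (fun η => (1 + ‖η‖) ^ (-((Module.finrank ℝ F : ℝ) + 1)) * f η) μ) :
    ContDiffOn ℝ ∞ (poissonIntegral μ f) {z | 0 < z.fst} := by
  have hpotential := contDiffOn_kernelPotential (p := -((Module.finrank ℝ F : ℝ) + 1))
    (φ := fun η : F => WithLp.toLp 2 ((0 : ℝ), η)) (by fun_prop) (by simpa using hf)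
    (by linarith [(Module.finrank ℝ F).cast_nonneg (α := ℝ)])
    (isPosHomogeneous_norm_rpow _) (contDiffOn_norm_rpow _)
  exact (innerSL ℝ _).contDiff.contDiffOn.mul
    (hpotential.mono fun z => notMem_closure_range_toLp_zero)

theorem laplacian_poissonIntegral
    (hf : Integrable (fun η => (1 + ‖η‖) ^ (-((Module.finrank ℝ F : ℝ) + 1)) * f η) μ)
    {z : WithLp 2 (ℝ × F)} (hz : 0 < z.fst) : Δ (poissonIntegral μ f) z = 0 := by
  have hrank : Module.finrank ℝ (WithLp 2 (ℝ × F)) = Module.finrank ℝ F + 1 := by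
    rw [(WithLp.linearEquiv 2 ℝ (ℝ × F)).finrank_eq, Module.finrank_prod, Module.finrank_self,
      add_comm]
  unfold poissonIntegral
  rw [laplacian_inner_mul_kernelPotential_norm_rpow (by fun_prop)
    (fun η => by simp [WithLp.prod_inner_apply]) (by simpa using hf)
    (by linarith [(Module.finrank ℝ F).cast_nonneg (α := ℝ)])
    (notMem_closure_range_toLp_zero hz), hrank]
  push_cast
  ring

end Poisson

open scoped ContDiff InnerProductSpace Laplacian in
theorem stmt9_general (n : ℕ) (μ : Measure (EuclideanSpace ℝ (Fin n)))
    (f : EuclideanSpace ℝ (Fin n) → ℝ)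
    (hf : Integrable (fun η => (1 + ‖η‖) ^ (-((n : ℝ) + 1)) * f η) μ)
    (u : ℝ → EuclideanSpace ℝ (Fin n) → ℝ)
    (hu : ∀ (x : ℝ) (y : EuclideanSpace ℝ (Fin n)), u x y =
      Real.Gamma (((n : ℝ) + 1) / 2) * Real.pi ^ (-(((n : ℝ) + 1) / 2)) *
        ∫ η : EuclideanSpace ℝ (Fin n),
          x * f η / ((‖y - η‖ ^ 2 + x ^ 2) ^ (((n : ℝ) + 1) / 2)) ∂μ) :
    ContDiffOn ℝ (⊤ : ℕ∞) (fun p : ℝ × EuclideanSpace ℝ (Fin n) => u p.1 p.2)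
      {p : ℝ × EuclideanSpace ℝ (Fin n) | 0 < p.1} ∧
    ∀ x : ℝ, 0 < x → ∀ y : EuclideanSpace ℝ (Fin n),
      deriv (deriv (fun s => u s y)) x + lapR n (u x) y = 0 := by
  set c := Real.Gamma (((n : ℝ) + 1) / 2) * Real.pi ^ (-(((n : ℝ) + 1) / 2))
  have hrank : Module.finrank ℝ (EuclideanSpace ℝ (Fin n)) = n := finrank_euclideanSpace_fin
  have hu' (x : ℝ) (y) : u x y = c • poissonIntegral μ f (WithLp.toLp 2 (x, y)) := by
    rw [hu, poissonIntegral_toLp, hrank, smul_eq_mul]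
  have hf' : Integrable (fun η => (1 + ‖η‖) ^
      (-((Module.finrank ℝ (EuclideanSpace ℝ (Fin n)) : ℝ) + 1)) * f η) μ := by rwa [hrank]
  have hsmooth := contDiffOn_poissonIntegral hf'
  refine ⟨?_, fun x hx y => ?_⟩
  · simp only [hu']
    exact (hsmooth.comp (WithLp.prodContinuousLinearEquiv 2 ℝ ℝ _).symm.contDiff.contDiffOn
      fun p hp => hp).const_smul c
  · have hU : ContDiffAt ℝ 2 (poissonIntegral μ f) (WithLp.toLp 2 (x, y)) :=
      (hsmooth.contDiffAt ((isOpen_lt continuous_const (WithLp.fstL 2 ℝ ℝ _).continuous).mem_nhds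
        hx)).of_le ENat.LEInfty.out
    calc deriv (deriv fun s => u s y) x + lapR n (u x) y
        = Δ (fun s => u s y) x + Δ (u x) y := by
          rw [lapR_eq_laplacian, InnerProductSpace.laplacian_eq_iteratedDeriv_real,
            iteratedDeriv_succ, iteratedDeriv_one]
      _ = Δ (c • poissonIntegral μ f) (WithLp.toLp 2 (x, y)) := by
          rw [laplacian_withLp_prod (U := c • poissonIntegral μ f) (hU.const_smul c)]
          simp only [Pi.smul_apply, ← hu']
      _ = c • Δ (poissonIntegral μ f) (WithLp.toLp 2 (x, y)) :=
          InnerProductSpace.laplacian_smul c hU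
      _ = 0 := by rw [laplacian_poissonIntegral hf' (z := WithLp.toLp 2 (x, y)) hx, smul_zero]

/-- for `f : ℝⁿ → ℝ` bounded and continuous, the Poisson integral
`u(x,y) = Γ((n+1)/2)·π^{−(n+1)/2}·∫_{ℝⁿ} x·f(η)/((|y−η|²+x²)^{(n+1)/2}) dη`
is smooth and harmonic on the half-space `{x > 0}`: `∂²u/∂x² + Δ_y u = 0`. -/
theorem stmt9 (n : ℕ) (hn : 1 ≤ n) (f : EuclideanSpace ℝ (Fin n) → ℝ)
    (hf_cont : Continuous f) (hf_bdd : ∃ C, ∀ η, |f η| ≤ C)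
    (u : ℝ → EuclideanSpace ℝ (Fin n) → ℝ)
    (hu : ∀ (x : ℝ) (y : EuclideanSpace ℝ (Fin n)), u x y =
      Real.Gamma (((n : ℝ) + 1) / 2) * Real.pi ^ (-(((n : ℝ) + 1) / 2)) *
        ∫ η : EuclideanSpace ℝ (Fin n),
          x * f η / ((‖y - η‖ ^ 2 + x ^ 2) ^ (((n : ℝ) + 1) / 2))) :
    ContDiffOn ℝ (⊤ : ℕ∞) (fun p : ℝ × EuclideanSpace ℝ (Fin n) => u p.1 p.2)
      {p : ℝ × EuclideanSpace ℝ (Fin n) | 0 < p.1} ∧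
    ∀ x : ℝ, 0 < x → ∀ y : EuclideanSpace ℝ (Fin n),
      deriv (deriv (fun s => u s y)) x + lapR n (u x) y = 0 := by
  exact stmt9_general n volume f (integrable_one_add_norm_rpow_mul_of_bounded (by simp)
    hf_cont.aestronglyMeasurable hf_bdd) u hu
end
end
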